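/- Let X ∈ ℕ. Then there exist an open interval I containing f_α(X) and an index m ∈ ℕ with [q_n](X) = 0 for all n > m, such that every Y ∈ ℕ with f_α(Y) ∈ I satisfies [q_n](Y) = [q_n](X) for all n ≤ m (i.e., the Ostrowski representation of Y restricted to the digits of q_0, …, q_m equals X). -/

import Mathlib

/-!
The signed errors `q n * α - p n` alternate in sign; their absolute values `c n` are positive and
satisfy `c n = a (n+2) * c (n+1) + c (n+2)`, with `1 = a 1 * c 0 + c 1` (`exists_errors`).
For Ostrowski digits `d` of `X`, the alternating tails `T k = ∑_{n ≥ k} (-1)^(n-k) d n * c n`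
satisfy `T k = d k * c k - T (k+1)`, and downward induction from the indices where `T` vanishes
gives the strict bounds `-c (k+1) < T (k+1) < c k`, the upper one improving to `c k - c (k+1)` when
`d k > 0`, by the Ostrowski condition. In particular `T 0` lies in `I_α`, so that
`T 0 = f_α X` (`exists_tails`).

If the digits of `Y` first differ from those of `X` at index `k`, then `|f_α Y - f_α X|` is
`|T_Y k - T_X k|`, and the bounds on `T_Y (k+1)` bound this below by `c (k+1) + T_X (k+1)` or
`c k - c (k+1) - T_X (k+1)`: positive quantities that depend on `X` and `k` only
(`digit_gap`). The minimum of these over the finitely many `k ≤ m` is the radius of the required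
interval, and `m` can be any index beyond which the digits of `X` vanish.
-/

/-- `a` is the sequence of partial quotients of the continued fraction expansion
`[a 0; a 1, a 2, …]` of `α`: there is a sequence `θ` of complete quotients with
`θ 0 = α`, `a n = ⌊θ n⌋` and `θ (n+1) = 1/(θ n - ⌊θ n⌋)`. -/
def IsCFExpansion (α : ℝ) (a : ℕ → ℕ) : Prop :=
  ∃ θ : ℕ → ℝ, θ 0 = α ∧
    ∀ n : ℕ, (a n : ℤ) = ⌊θ n⌋ ∧ θ (n + 1) = 1 / (θ n - (⌊θ n⌋ : ℝ))

/-- `p n / q n` are the convergents of the continued fraction with partial quotients `a`: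
`p₋₁ = 1, q₋₁ = 0, p₀ = a₀, q₀ = 1`, and
`pₙ = aₙ pₙ₋₁ + pₙ₋₂`, `qₙ = aₙ qₙ₋₁ + qₙ₋₂` for `n ≥ 1`. -/
def IsConvergents (a p q : ℕ → ℕ) : Prop :=
  p 0 = a 0 ∧ q 0 = 1 ∧ p 1 = a 1 * a 0 + 1 ∧ q 1 = a 1 ∧
  (∀ n : ℕ, p (n + 2) = a (n + 2) * p (n + 1) + p n) ∧
  (∀ n : ℕ, q (n + 2) = a (n + 2) * q (n + 1) + q n)

/-- `d` is the sequence of Ostrowski digits of `X` in base the continued fraction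
with partial quotients `a` and convergent denominators `q`: `d n` is the digit
`b_{n+1}` multiplying `q n`, the digits are eventually zero,
`X = Σ_{n} d n * q n`, `d 0 < a 1`, `d n ≤ a (n+1)` for `n ≥ 1`, and
`d n = 0` whenever `d (n+1) = a (n+2)`. -/
def IsOstrowskiRep (a q : ℕ → ℕ) (X : ℕ) (d : ℕ → ℕ) : Prop :=
  d 0 < a 1 ∧ (∀ n : ℕ, d (n + 1) ≤ a (n + 2)) ∧
  (∀ n : ℕ, d (n + 1) = a (n + 2) → d n = 0) ∧
  ∃ N : ℕ, (∀ n : ℕ, N ≤ n → d n = 0) ∧ X = ∑ n ∈ Finset.range N, d n * q n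

/-- The half-open interval `I_α = [−1/ζ_α, 1 − 1/ζ_α)` where `ζ_α = 1/(α − ⌊α⌋)`. -/
def Ialpha (α : ℝ) : Set ℝ :=
  Set.Ico (-(1 / (1 / (α - (⌊α⌋ : ℝ))))) (1 - 1 / (1 / (α - (⌊α⌋ : ℝ))))

/-- `f` is the function `f_α : ℕ → I_α` with `f_α X` the unique element of `I_α`
such that `α X − f_α X` is a (natural) integer. -/
def IsFracPart (α : ℝ) (f : ℕ → ℝ) : Prop :=
  ∀ X : ℕ, f X ∈ Ialpha α ∧ ∃ U : ℕ, α * (X : ℝ) - f X = (U : ℝ)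

/-- The absolute errors `c n = |q n * α - p n|` of the convergents, together with the facts about
them that the tail estimates use. -/
theorem exists_errors (α : ℝ) (hirr : Irrational α)
    (a : ℕ → ℕ) (ha : IsCFExpansion α a)
    (p q : ℕ → ℕ) (hpq : IsConvergents a p q) :
    ∃ c : ℕ → ℝ, (∀ n, 0 < c n) ∧ (∀ n, c n = a (n + 2) * c (n + 1) + c (n + 2)) ∧
      1 = a 1 * c 0 + c 1 ∧ c 0 = α - ⌊α⌋ ∧
      ∀ n, c n = (-1) ^ n * (α * q n - p n) := by
  obtain ⟨θ, h0, hθ⟩ := ha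
  obtain ⟨p0, q0, p1, q1, hp, hq⟩ := hpq
  have hfl : ∀ n, ((⌊θ n⌋ : ℤ) : ℝ) = a n := fun n => by rw [← (hθ n).1]; simp
  have hθirr : ∀ n, Irrational (θ n) := by
    intro n
    induction n with
    | zero => rwa [h0]
    | succ n ih =>
      rw [(hθ n).2, one_div]
      exact (ih.sub_intCast _).inv
  have hpos : ∀ n, 0 < θ n - a n := by
    intro n
    rw [← hfl n]
    have h1 := Int.floor_le (θ n)
    rcases h1.lt_or_eq with h | h
    · linarith
    · exact absurd h.symm ((hθirr n).ne_int _)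
  have hstep : ∀ n, (θ n - a n) * θ (n + 1) = 1 := by
    intro n
    rw [(hθ n).2, hfl n]
    exact mul_one_div_cancel (hpos n).ne'
  have hα0 : (⌊α⌋ : ℝ) = a 0 := by rw [← hfl 0, h0]
  set c : ℕ → ℝ := fun n => (-1) ^ n * (α * q n - p n) with hc
  have hc0 : c 0 = θ 0 - a 0 := by simp [hc, p0, q0, h0]
  have hc1 : 1 = a 1 * c 0 + c 1 := by
    simp only [hc, p0, q0, p1, q1]
    push_cast
    ring
  have hrec : ∀ n, c n = a (n + 2) * c (n + 1) + c (n + 2) := by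
    intro n
    simp only [hc, hp, hq]
    push_cast
    ring
  -- Ratios of consecutive errors are the fractional parts of the complete quotients.
  have hquot : ∀ n, c (n + 1) = c n * (θ (n + 1) - a (n + 1)) := by
    intro n
    induction n with
    | zero =>
      have := hstep 0
      rw [← hc0] at this
      simp only [zero_add] at *
      linarith
    | succ n ih =>
      have h1 : c n = c (n + 1) * θ (n + 2) := by
        rw [ih, mul_assoc, hstep (n + 1), mul_one]
      have := hrec n
      rw [h1] at this
      show c (n + 2) = c (n + 1) * (θ (n + 2) - a (n + 2))
      linarith
  refine ⟨c, ?_, hrec, hc1, by rw [hc0, h0, hα0], fun n => rfl⟩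
  intro n
  induction n with
  | zero => rw [hc0]; exact hpos 0
  | succ n ih => rw [hquot n]; exact mul_pos ih (hpos _)

/-- The bounds hold trivially beyond the support of `d`, where `T` vanishes, and propagate
downward along `T k = d k * c k - T (k+1)`. -/
theorem tail_bounds (a : ℕ → ℕ) (c : ℕ → ℝ) (hpos : ∀ n, 0 < c n)
    (hrec : ∀ n, c n = a (n + 2) * c (n + 1) + c (n + 2))
    (d : ℕ → ℕ) (hd : ∀ n, d (n + 1) ≤ a (n + 2))
    (T : ℕ → ℝ) (hT : ∀ k, T k = d k * c k - T (k + 1))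
    (N : ℕ) (hN : ∀ n, N ≤ n → T n = 0) :
    ∀ k, -c (k + 1) < T (k + 1) ∧ T (k + 1) < c k := by
  have key : ∀ j k, N ≤ k + j → -c (k + 1) < T (k + 1) ∧ T (k + 1) < c k := by
    intro j
    induction j with
    | zero =>
      intro k hk
      rw [hN (k + 1) (by omega)]
      exact ⟨by linarith [hpos (k + 1)], hpos k⟩
    | succ j ih =>
      intro k hk
      obtain ⟨h1, h2⟩ := ih (k + 1) (by omega)
      have e := hT (k + 1)
      have hle : (d (k + 1) : ℝ) * c (k + 1) ≤ a (k + 2) * c (k + 1) :=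
        mul_le_mul_of_nonneg_right (by exact_mod_cast hd k) (hpos _).le
      have hge : 0 ≤ (d (k + 1) : ℝ) * c (k + 1) :=
        mul_nonneg (Nat.cast_nonneg _) (hpos _).le
      have := hrec k
      exact ⟨by linarith, by linarith⟩
  exact fun k => key N k (by omega)

/-- The alternating tails `T k = ∑_{n ≥ k} (-1)^(n-k) d n * c n` of the expansion of
`f_α X = T 0`, with their bounds. -/
theorem exists_tails (α : ℝ) (a p q : ℕ → ℕ) (c : ℕ → ℝ) (hpos : ∀ n, 0 < c n)
    (hrec : ∀ n, c n = a (n + 2) * c (n + 1) + c (n + 2))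
    (h1 : 1 = a 1 * c 0 + c 1) (h0 : c 0 = α - ⌊α⌋)
    (hc : ∀ n, c n = (-1) ^ n * (α * q n - p n))
    (X : ℕ) (d : ℕ → ℕ) (hd : IsOstrowskiRep a q X d)
    (x : ℝ) (hx : x ∈ Ialpha α) (hU : ∃ U : ℕ, α * (X : ℝ) - x = (U : ℝ)) :
    ∃ T : ℕ → ℝ, T 0 = x ∧ (∀ k, T k = d k * c k - T (k + 1)) ∧
      (∀ k, -c (k + 1) < T (k + 1) ∧ T (k + 1) < c k) ∧
      ∀ k, 0 < d k → T (k + 1) < c k - c (k + 1) := by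
  obtain ⟨hd0, hd1, hd2, N, hN, hX⟩ := hd
  obtain ⟨U, hU⟩ := hU
  set s : ℕ → ℝ := fun k => ∑ n ∈ Finset.range k, (d n : ℝ) * (α * q n - p n) with hs
  set T : ℕ → ℝ := fun k => (-1) ^ k * (s N - s k) with hTdef
  have hsq : ∀ k : ℕ, ((-1 : ℝ) ^ k) * (-1) ^ k = 1 := fun k => by
    rw [← mul_pow]; simp
  have hT : ∀ k, T k = d k * c k - T (k + 1) := by
    intro k
    have e : s (k + 1) = s k + (d k : ℝ) * (α * q k - p k) := Finset.sum_range_succ _ _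
    simp only [hTdef, e, hc k]
    ring
  have hTN : ∀ n, N ≤ n → T n = 0 := by
    intro n hn
    have : s N = s n := by
      refine Finset.sum_subset (Finset.range_mono hn) ?_
      intro i _ hi
      have : d i = 0 := hN i (by simpa using hi)
      simp [this]
    simp [hTdef, this]
  have hb := tail_bounds a c hpos hrec d hd1 T hT N hTN
  refine ⟨T, ?_, hT, hb, ?_⟩
  · obtain ⟨hb1, hb2⟩ := hb 0
    have e := hT 0
    have hle : ((d 0 : ℝ) + 1) * c 0 ≤ a 1 * c 0 :=
      mul_le_mul_of_nonneg_right (by exact_mod_cast hd0) (hpos _).le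
    have hge : 0 ≤ (d 0 : ℝ) * c 0 := mul_nonneg (Nat.cast_nonneg _) (hpos _).le
    simp only [zero_add] at *
    have hI : -c 0 ≤ x ∧ x < 1 - c 0 := by
      simpa only [Ialpha, one_div_one_div, ← h0, Set.mem_Ico] using hx
    have hT0 : T 0 = α * X - (∑ n ∈ Finset.range N, d n * p n : ℕ) := by
      simp only [hTdef, hs, hX]
      push_cast
      rw [Finset.mul_sum, Finset.range_zero, Finset.sum_empty, ← Finset.sum_sub_distrib,
        pow_zero, one_mul, sub_zero]
      exact Finset.sum_congr rfl fun n _ => by ring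
    -- `T 0` and `x` lie in the same half-open unit interval and differ by an integer.
    generalize (∑ n ∈ Finset.range N, d n * p n) = V at hT0
    have hV : T 0 - x = (((U : ℤ) - (V : ℤ) : ℤ) : ℝ) := by
      push_cast
      linarith
    have hlt : (-1 : ℝ) < (((U : ℤ) - (V : ℤ) : ℤ) : ℝ) := by rw [← hV]; linarith [hI.2]
    have hgt : (((U : ℤ) - (V : ℤ) : ℤ) : ℝ) < 1 := by rw [← hV]; linarith [hI.1]
    have hz : (U : ℤ) - (V : ℤ) = 0 := by
      have i1 : (-1 : ℤ) < (U : ℤ) - (V : ℤ) := by exact_mod_cast hlt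
      have i2 : (U : ℤ) - (V : ℤ) < 1 := by exact_mod_cast hgt
      omega
    rw [hz] at hV
    simp only [Int.cast_zero] at hV
    linarith
  · intro k hk
    have hlt : d (k + 1) < a (k + 2) :=
      lt_of_le_of_ne (hd1 k) fun h => by have := hd2 k h; omega
    have hle : ((d (k + 1) : ℝ) + 1) * c (k + 1) ≤ a (k + 2) * c (k + 1) :=
      mul_le_mul_of_nonneg_right (by exact_mod_cast hlt) (hpos _).le
    have := hrec k
    have := hT (k + 1)
    have := (hb (k + 1)).1
    linarith

/-- If the digits `d` and `e` differ at index `k`, the tails at `k` are separated by a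
distance that depends on the first tail sequence only. -/
theorem digit_gap (c : ℕ → ℝ) (hpos : ∀ n, 0 < c n) (d e : ℕ → ℕ) (T S : ℕ → ℝ)
    (hT : ∀ k, T k = d k * c k - T (k + 1)) (hS : ∀ k, S k = e k * c k - S (k + 1))
    (hT2 : ∀ k, 0 < d k → T (k + 1) < c k - c (k + 1))
    (hSb : ∀ k, -c (k + 1) < S (k + 1) ∧ S (k + 1) < c k)
    (hS2 : ∀ k, 0 < e k → S (k + 1) < c k - c (k + 1))
    (k : ℕ) (hk : e k ≠ d k) (ε : ℝ) (hε1 : ε ≤ c (k + 1) + T (k + 1))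
    (hε2 : T (k + 1) < c k - c (k + 1) → ε ≤ c k - c (k + 1) - T (k + 1)) :
    ε ≤ |S k - T k| := by
  have h1 := hT k
  have h2 := hS k
  rcases Nat.lt_or_gt_of_ne hk with h | h
  · have hle : ((e k : ℝ) + 1) * c k ≤ d k * c k :=
      mul_le_mul_of_nonneg_right (by exact_mod_cast h) (hpos _).le
    have := hε2 (hT2 k (by omega))
    have := (hSb k).1
    rw [abs_sub_comm]
    refine le_trans ?_ (le_abs_self _)
    linarith
  · have hle : ((d k : ℝ) + 1) * c k ≤ e k * c k :=
      mul_le_mul_of_nonneg_right (by exact_mod_cast h) (hpos _).le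
    have := hS2 k (by omega)
    refine le_trans ?_ (le_abs_self _)
    linarith

/-- Around every value `f_α X` there is an open interval `I` and an index `m`
(with all digits of `X` above `m` zero) such that every `Y` with `f_α Y ∈ I`
has the same Ostrowski digits as `X` up to index `m`. -/
theorem fracPart_locally_determines_prefix
    (α : ℝ) (hα : 0 < α) (hirr : Irrational α)
    (a : ℕ → ℕ) (ha : IsCFExpansion α a)
    (p q : ℕ → ℕ) (hpq : IsConvergents a p q)
    (ost : ℕ → ℕ → ℕ) (host : ∀ X : ℕ, IsOstrowskiRep a q X (ost X))
    (fα : ℕ → ℝ) (hf : IsFracPart α fα)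
    (X : ℕ) :
    ∃ lo hi : ℝ, ∃ m : ℕ,
      lo < fα X ∧ fα X < hi ∧
      (∀ n : ℕ, m < n → ost X n = 0) ∧
      ∀ Y : ℕ, fα Y ∈ Set.Ioo lo hi → ∀ n : ℕ, n ≤ m → ost Y n = ost X n := by
  obtain ⟨c, hpos, hrec, h1, h0, hc⟩ := exists_errors α hirr a ha p q hpq
  have htails := fun Y => exists_tails α a p q c hpos hrec h1 h0 hc Y (ost Y) (host Y)
    (fα Y) (hf Y).1 (hf Y).2
  choose T hT0 hT hTb hT2 using htails
  obtain ⟨-, -, -, N, hN, -⟩ := host X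
  have main : ∀ m : ℕ, ∃ ε : ℝ, 0 < ε ∧
      ∀ Y, |fα Y - fα X| < ε → ∀ n, n < m → ost Y n = ost X n := by
    intro m
    induction m with
    | zero => exact ⟨1, one_pos, fun Y _ n hn => absurd hn (Nat.not_lt_zero n)⟩
    | succ m ih =>
      obtain ⟨ε, hε, hY⟩ := ih
      obtain ⟨δ, hδ, hδ1, hδ2⟩ : ∃ δ : ℝ, 0 < δ ∧ δ ≤ c (m + 1) + T X (m + 1) ∧
          (T X (m + 1) < c m - c (m + 1) → δ ≤ c m - c (m + 1) - T X (m + 1)) := by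
        have hp1 : 0 < c (m + 1) + T X (m + 1) := by linarith [(hTb X m).1]
        by_cases h : T X (m + 1) < c m - c (m + 1)
        · exact ⟨min (c (m + 1) + T X (m + 1)) (c m - c (m + 1) - T X (m + 1)),
            lt_min hp1 (by linarith), min_le_left _ _, fun _ => min_le_right _ _⟩
        · exact ⟨_, hp1, le_rfl, fun h' => absurd h' h⟩
      refine ⟨min ε δ, lt_min hε hδ, fun Y hYX n hn => ?_⟩
      have hpre := hY Y (lt_of_lt_of_le hYX (min_le_left _ _))
      rcases Nat.lt_succ_iff_lt_or_eq.mp hn with h | rfl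
      · exact hpre n h
      -- Removing a common prefix of digits preserves the distance.
      have hdist : ∀ k, k ≤ n → |T Y k - T X k| = |fα Y - fα X| := by
        intro k
        induction k with
        | zero => intro _; rw [hT0, hT0]
        | succ k ihk =>
          intro hk
          rw [← ihk (by omega), hT Y k, hT X k, hpre k (by omega), abs_sub_comm]
          congr 1
          ring
      by_contra hne
      have := digit_gap c hpos (ost X) (ost Y) (T X) (T Y) (hT X) (hT Y) (hT2 X) (hTb Y)
        (hT2 Y) n hne δ hδ1 hδ2
      rw [hdist n le_rfl] at this
      exact absurd (lt_of_lt_of_le hYX (min_le_right _ _)) (not_lt.mpr this)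
  obtain ⟨ε, hε, hY⟩ := main (N + 1)
  refine ⟨fα X - ε, fα X + ε, N, by linarith, by linarith, fun n hn => hN n hn.le, ?_⟩
  intro Y hYI n hn
  refine hY Y ?_ n (by omega)
  rw [abs_lt]
  exact ⟨by linarith [hYI.1], by linarith [hYI.2]⟩
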